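/- Fix an integer k ≥ 1 and let b_n^{(k)} denote the n-th element, in increasing order, of the set of positive integers that are products of exactly k distinct primes; set B_k(n) = b_n^{(k)}/n. Let f : ℕ → ℝ satisfy (log N)/f(N) → 0 and f(N)/(N/B_k(N)²)^{1/(2k+1)} → 0 as N → ∞. Then for every ε > 0 there is N₀ such that for every N ≥ N₀ and every interval I ⊆ ℝ with |I| > exp(−f(N)), one has | 2^{−N} · #{ (s_1,…,s_N) ∈ {−1,1}^N : Σ_{n=1}^N s_n/b_n^{(k)} ∈ I } − ∫_I g(x) dx | ≤ ε·|I|, where g(x) = 2∫_0^∞ cos(2πux) ∏_{n=1}^∞ cos(2πu/b_n^{(k)}) du. -/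

import Mathlib

open Filter Real MeasureTheory

/-!
Write `X_N = ∑_{n ≤ N} s_n / b_n` with independent random signs. Its characteristic function
`𝔼 exp (2πi u X_N) = ∏_{n ≤ N} cos (2πu / b_n)` converges pointwise to `ϱ (2u)`, and `g` is the
density with characteristic function `ϱ (2u)`. Everything rests on a decay estimate uniform in `N`:
for a suitable `F ≥ f` with `F N → ∞`, the partial product `∏_{n ≤ N} cos (πu / b_n)` is at most
`u⁻²` in absolute value for `U ≤ u ≤ exp (3 F N)`, with `U` fixed (`exists_decay`).

For `b_N ≤ u ≤ exp (3 F N)` this is a counting argument (`abs_prod_cos_le`). A factor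
`cos (πu / b_n)` is at most `exp (-2δ²)` in absolute value unless `u / b_n` is within `δ` of an
integer. In that case `b_n` divides an integer within `δ b_N` of `u`, and an integer of size
`O(u)` has only `O(log u) ^ k` divisors in `𝒫_k`. Choosing `δ` so that at most half of the `n ≤ N`
are exceptional, the product is at most `exp (-δ² N)`, and `δ² N ≥ 6 F N` follows from the growth
condition on `f`. Smaller `u` are treated with fewer factors: for `F N = max (f N) (log² N)`,
Chebyshev's bound gives `b_{N+1} ≤ exp (3 F N)`, so the ranges for consecutive `N` overlap.

The passage to probabilities is Fourier smoothing. A smooth kernel supported in `[-1, 1]` and scaled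
to width `η = δ min (|I|, 1)`, with a new small constant `δ`, turns the law of `X_N` into a density
which is uniformly close to `g`: the range `|u| ≤ exp (3 F N) / 2` is handled by dominated
convergence, and beyond it the transform `φ (η u) = O((η u)⁻⁴)` of the kernel is negligible, as
`η ≥ δ exp (-F N)` (`eventually_integral_le`). Since the kernel has compact support, the probability
that `X_N ∈ I` lies between integrals of this density over the intervals obtained from `I` by
moving both ends inwards, respectively outwards, by `η` (`prob_sub_integral_le`).
-/

/-! ### Growth of the elements of `𝒫_k` -/

/-- A weak form of Chebyshev's bound for the `n`-th prime. Only an exponent strictly between `1` and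
`3 / 2` is needed: it makes `N / B ^ 2` grow at least like a power of `N`, where `B = b N / N`. -/
lemma exists_nth_prime_le :
    ∃ C : ℝ, 1 ≤ C ∧ ∀ M : ℕ, (Nat.nth Nat.Prime M : ℝ) ≤ C * ((M : ℝ) + 1) ^ (5 / 4 : ℝ) := by
  have h1 : (fun x : ℝ => x ^ (4 / 5 : ℝ) * Real.log x) =o[atTop] (fun x : ℝ => x) := by
    have h := (isLittleO_log_rpow_atTop (r := 1 / 5) (by norm_num))
    have h' := (Asymptotics.isBigO_refl (fun x : ℝ => x ^ (4 / 5 : ℝ)) atTop).mul_isLittleO h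
    refine h'.congr' EventuallyEq.rfl ?_
    filter_upwards [eventually_gt_atTop 0] with x hx
    rw [← Real.rpow_add hx]; norm_num
  have h2 : (fun x : ℝ => Real.log x) =o[atTop] (fun x : ℝ => x) := isLittleO_log_id_atTop
  have e1 := h1.bound (c := 1 / 4) (by norm_num)
  have e2 := h2.bound (c := 1 / 8) (by norm_num)
  obtain ⟨X, hX⟩ := eventually_atTop.1 (e1.and (e2.and (eventually_ge_atTop (2 : ℝ))))
  refine ⟨max X 1, le_max_right _ _, fun M => ?_⟩
  set x := Nat.nth Nat.Prime M with hx
  have hM1 : (1 : ℝ) ≤ (M : ℝ) + 1 := by linarith [Nat.cast_nonneg (α := ℝ) M]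
  have hMp : (1 : ℝ) ≤ ((M : ℝ) + 1) ^ (5 / 4 : ℝ) := Real.one_le_rpow hM1 (by norm_num)
  rcases le_or_gt X (x : ℝ) with hXx | hXx
  · obtain ⟨b1, -, hx2⟩ := hX x hXx
    have hX1 : X ≤ (x : ℝ) + 1 := by linarith
    obtain ⟨-, b2, -⟩ := hX (x + 1) hX1
    have hpi : Nat.primeCounting x = M + 1 := by
      rw [Nat.primeCounting, Nat.primeCounting', Nat.count_succ, hx,
        Nat.count_nth_of_infinite Nat.infinite_setOfPred_prime, if_pos (Nat.prime_nth_prime M)]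
    have h3 := Chebyshev.pi_ge x
    rw [hpi] at h3
    have hxp : (0 : ℝ) < x := by linarith
    have hlx : 0 < Real.log x := Real.log_pos (by linarith)
    rw [div_le_iff₀ hlx] at h3
    rw [Real.norm_of_nonneg (by positivity), Real.norm_of_nonneg hxp.le] at b1
    rw [Real.norm_of_nonneg (Real.log_nonneg (by linarith)),
      Real.norm_of_nonneg (by linarith)] at b2
    have hl2 := Real.log_two_gt_d9
    push_cast at h3
    have h4 : (x : ℝ) ^ (4 / 5 : ℝ) * Real.log x ≤ ((M : ℝ) + 1) * Real.log x := by nlinarith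
    have h5 : (x : ℝ) ^ (4 / 5 : ℝ) ≤ (M : ℝ) + 1 := le_of_mul_le_mul_right h4 hlx
    calc (x : ℝ) = ((x : ℝ) ^ (4 / 5 : ℝ)) ^ (5 / 4 : ℝ) := by
          rw [← Real.rpow_mul hxp.le]; norm_num
      _ ≤ ((M : ℝ) + 1) ^ (5 / 4 : ℝ) := Real.rpow_le_rpow (by positivity) h5 (by norm_num)
      _ ≤ _ := le_mul_of_one_le_left (by linarith) (le_max_right _ _)
  · calc (x : ℝ) ≤ max X 1 := hXx.le.trans (le_max_left _ _)
      _ ≤ _ := le_mul_of_one_le_right (by positivity) hMp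

/-- The set `𝒫_k` as a predicate: `m` is a product of exactly `k` distinct primes. -/
def IsProdPrimes (k m : ℕ) : Prop := Squarefree m ∧ m.primeFactors.card = k

lemma isProdPrimes_prod (s : Finset ℕ) (hs : ∀ p ∈ s, p.Prime) :
    IsProdPrimes s.card (∏ p ∈ s, p) := by
  refine ⟨?_, by rw [Nat.primeFactors_prod hs]⟩
  refine Finset.squarefree_prod_of_pairwise_isCoprime ?_ fun p hp => (hs p hp).squarefree
  intro p hp q hq hpq
  exact Nat.coprime_iff_isRelPrime.1 ((Nat.coprime_primes (hs p hp) (hs q hq)).2 hpq)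

/-- The set `𝒫_k` contains `q p` for every prime `p` beyond the first `k - 1` primes, whose product is
`q`. So it is infinite and its elements grow no faster than the primes, up to a constant. -/
lemma exists_nth_isProdPrimes_le (k : ℕ) (hk : 1 ≤ k) :
    (Set.ofPred (IsProdPrimes k)).Infinite ∧
    ∃ C : ℝ, 1 ≤ C ∧ ∀ j : ℕ,
      (Nat.nth (IsProdPrimes k) j : ℝ) ≤ C * ((j : ℝ) + 1) ^ (5 / 4 : ℝ) := by
  obtain ⟨C, hC, hp⟩ := exists_nth_prime_le
  set P : ℕ → ℕ := Nat.nth Nat.Prime with hP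
  have hmono : StrictMono P := Nat.nth_strictMono Nat.infinite_setOfPred_prime
  have hprime : ∀ i, (P i).Prime := Nat.prime_nth_prime
  set q : ℕ := ∏ i ∈ Finset.range (k - 1), P i with hq
  have hq0 : 0 < q := Finset.prod_pos fun i _ => (hprime i).pos
  set h : ℕ → ℕ := fun j => q * P (k - 1 + j) with hh
  have hmem : ∀ j, IsProdPrimes k (h j) := by
    intro j
    have hnot : P (k - 1 + j) ∉ (Finset.range (k - 1)).image P := by
      simp only [Finset.mem_image, Finset.mem_range, not_exists, not_and]
      intro i hi heq
      have := hmono.injective heq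
      omega
    have := isProdPrimes_prod (insert (P (k - 1 + j)) ((Finset.range (k - 1)).image P)) (by
      intro p hp
      simp only [Finset.mem_insert, Finset.mem_image] at hp
      rcases hp with rfl | ⟨i, -, rfl⟩ <;> exact hprime _)
    rw [Finset.card_insert_of_notMem hnot, Finset.card_image_of_injective _ hmono.injective,
      Finset.card_range, Nat.sub_add_cancel hk, Finset.prod_insert hnot,
      Finset.prod_image (fun a _ b _ hab => hmono.injective hab), mul_comm] at this
    exact this
  have hhm : StrictMono h := fun a b hab =>
    Nat.mul_lt_mul_of_pos_left (hmono (by omega)) hq0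
  have hinf : (Set.ofPred (IsProdPrimes k)).Infinite :=
    (Set.infinite_range_of_injective hhm.injective).mono (by rintro _ ⟨j, rfl⟩; exact hmem j)
  refine ⟨hinf, q * C * (k : ℝ) ^ (5 / 4 : ℝ), ?_, fun j => ?_⟩
  · have h1 : (1 : ℝ) ≤ q := by exact_mod_cast hq0
    have h2 : (1 : ℝ) ≤ (k : ℝ) ^ (5 / 4 : ℝ) :=
      Real.one_le_rpow (by exact_mod_cast hk) (by norm_num)
    exact one_le_mul_of_one_le_of_one_le (one_le_mul_of_one_le_of_one_le h1 hC) h2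
  classical
  have hle : Nat.nth (IsProdPrimes k) j ≤ h j := by
    have hc : StrictMono fun j => Nat.count (IsProdPrimes k) (h j) := fun a b hab =>
      Nat.count_strict_mono (hmem a) (hhm hab)
    calc Nat.nth (IsProdPrimes k) j ≤ Nat.nth (IsProdPrimes k) (Nat.count (IsProdPrimes k) (h j)) :=
          Nat.nth_monotone hinf hc.le_apply
      _ = h j := Nat.nth_count (hmem j)
  calc (Nat.nth (IsProdPrimes k) j : ℝ) ≤ (h j : ℝ) := by exact_mod_cast hle
    _ = q * (P (k - 1 + j) : ℝ) := by simp [hh]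
    _ ≤ q * (C * (((k - 1 + j : ℕ) : ℝ) + 1) ^ (5 / 4 : ℝ)) := by gcongr; exact hp _
    _ ≤ q * (C * ((k : ℝ) * ((j : ℝ) + 1)) ^ (5 / 4 : ℝ)) := by
        gcongr
        rw [Nat.cast_add, Nat.cast_sub hk]
        have : (1 : ℝ) ≤ k := by exact_mod_cast hk
        push_cast
        nlinarith [Nat.cast_nonneg (α := ℝ) j]
    _ = _ := by rw [Real.mul_rpow (by positivity) (by positivity)]; ring

/-! ### Decay of the partial cosine products -/

/-- Each factor whose argument stays at distance `δ` from the integers contributes a gain, because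
`|cos (π t)| ≤ 1 - 2 t ^ 2` for `|t| ≤ 1 / 2`. -/
lemma abs_cos_pi_mul_le {x δ : ℝ} (hδ : 0 ≤ δ) (h : ∀ m : ℤ, δ ≤ |x - m|) :
    |Real.cos (π * x)| ≤ Real.exp (-(2 * δ ^ 2)) := by
  set t := x - round x with ht
  have h1 : δ ≤ |t| := h (round x)
  have h2 : |t| ≤ 1 / 2 := abs_sub_round x
  have hpi := Real.pi_pos
  have h3 : |Real.cos (π * x)| = |Real.cos (π * t)| := by
    have : π * t = π * x - (round x : ℤ) * π := by rw [ht]; ring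
    rw [this, Real.cos_sub_int_mul_pi, abs_mul, abs_zpow]
    simp
  have h4 : |π * t| ≤ π / 2 := by rw [abs_mul, abs_of_pos hpi]; nlinarith
  rw [h3, abs_of_nonneg (Real.cos_nonneg_of_mem_Icc (abs_le.1 h4))]
  have h5 := Real.cos_le_one_sub_mul_cos_sq (x := π * t) (by linarith)
  have h6 : 1 - 2 / π ^ 2 * (π * t) ^ 2 = 1 - 2 * t ^ 2 := by field_simp
  have h7 : δ ^ 2 ≤ t ^ 2 := by rw [← sq_abs t]; gcongr
  have h8 := Real.add_one_le_exp (-(2 * δ ^ 2))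
  linarith

/-- A positive integer `j ≤ 2 ^ R` has at most `R ^ k` divisors in `𝒫_k`, since such a divisor is
determined by a `k`-element set of prime factors of `j`, and `j` has at most `log₂ j` of those. -/
lemma card_divisors_le {k j : ℕ} (hj : 0 < j) {R : ℝ} (hR : (j : ℝ) ≤ 2 ^ R) (D : Finset ℕ)
    (hD : ∀ d ∈ D, IsProdPrimes k d ∧ d ∣ j) : (D.card : ℝ) ≤ R ^ k := by
  have h1 : D.card ≤ (j.primeFactors.powersetCard k).card := by
    refine Finset.card_le_card_of_injOn Nat.primeFactors (fun d hd => ?_) fun d hd e he h => ?_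
    · obtain ⟨hd1, hd2⟩ := hD d hd
      exact Finset.mem_coe.2
        (Finset.mem_powersetCard.2 ⟨Nat.primeFactors_mono hd2 hj.ne', hd1.2⟩)
    · rw [← Nat.prod_primeFactors_of_squarefree (hD d hd).1.1,
        ← Nat.prod_primeFactors_of_squarefree (hD e he).1.1, h]
  rw [Finset.card_powersetCard] at h1
  have h2 : (2 : ℝ) ^ (j.primeFactors.card : ℝ) ≤ 2 ^ R := by
    refine le_trans ?_ hR
    rw [Real.rpow_natCast]
    have : 2 ^ j.primeFactors.card ≤ j :=
      (Finset.pow_card_le_prod _ _ _ fun p hp => (Nat.prime_of_mem_primeFactors hp).two_le).trans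
        (Nat.le_of_dvd hj (Nat.prod_primeFactors_dvd j))
    exact_mod_cast this
  have h3 : (j.primeFactors.card : ℝ) ≤ R := (Real.rpow_le_rpow_left_iff (by norm_num)).1 h2
  calc (D.card : ℝ) ≤ ((j.primeFactors.card ^ k : ℕ) : ℝ) := by
        exact_mod_cast h1.trans (Nat.choose_le_pow _ _)
    _ ≤ R ^ k := by push_cast; gcongr

/-- Among `b 1 < ⋯ < b N` at most `(2 δ b_N + 1) R ^ k` terms have `u / b n` within `δ` of an
integer: each of them divides one of the at most `2 δ b_N + 1` integers `j` with
`|u - j| ≤ δ b_N`. -/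
lemma card_bad_le {k N : ℕ} {b : ℕ → ℕ} (hP : ∀ n ∈ Finset.Icc 1 N, IsProdPrimes k (b n))
    (hinj : Set.InjOn b (Finset.Icc 1 N)) (hle : ∀ n ∈ Finset.Icc 1 N, b n ≤ b N)
    {u δ R : ℝ} (hδ : 0 < δ) (hδ1 : δ ≤ 1 / 2) (hu0 : 0 < u) (hu : (b N : ℝ) ≤ u)
    (hR0 : 0 ≤ R) (hR : 2 * u ≤ 2 ^ R)
    (S : Finset ℕ) (hS : S ⊆ Finset.Icc 1 N)
    (hbad : ∀ n ∈ S, ∃ m : ℤ, |u / b n - m| < δ) :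
    (S.card : ℝ) ≤ (2 * (δ * b N) + 1) * R ^ k := by
  classical
  set W : ℝ := δ * b N with hW
  have hW0 : 0 ≤ W := by positivity
  have hWu : W ≤ u / 2 := by rw [hW]; nlinarith [Nat.cast_nonneg (α := ℝ) (b N)]
  set J : Finset ℕ := Finset.Icc ⌈u - W⌉₊ ⌊u + W⌋₊ with hJ
  have hJmem : ∀ j : ℕ, j ∈ J ↔ u - W ≤ j ∧ (j : ℝ) ≤ u + W := by
    intro j
    rw [hJ, Finset.mem_Icc, Nat.ceil_le, Nat.le_floor_iff (by linarith)]
  have hJcard : (J.card : ℝ) ≤ 2 * W + 1 := by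
    rw [hJ, Nat.card_Icc]
    rcases le_total ⌈u - W⌉₊ (⌊u + W⌋₊ + 1) with h | h
    · rw [Nat.cast_sub h]
      push_cast
      have := Nat.le_ceil (u - W)
      have := Nat.floor_le (a := u + W) (by linarith)
      linarith
    · rw [Nat.sub_eq_zero_of_le h]; push_cast; linarith
  have hsub : S ⊆ J.biUnion fun j => S.filter fun n => b n ∣ j := by
    intro n hn
    obtain ⟨m, hm⟩ := hbad n hn
    have hbn0 : 0 < b n := Nat.pos_of_ne_zero (hP n (hS hn)).1.ne_zero
    have hbn : (0 : ℝ) < b n := by exact_mod_cast hbn0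
    have hbN : (b n : ℝ) ≤ b N := by exact_mod_cast hle n (hS hn)
    have h1 : |u - m * b n| < δ * b n := by
      have : u - m * b n = (u / b n - m) * b n := by field_simp
      rw [this, abs_mul, abs_of_pos hbn]
      gcongr
    have h2 : |u - m * b n| < W := h1.trans_le (by rw [hW]; gcongr)
    rw [abs_lt] at h2
    have hm0 : 0 ≤ m := by
      by_contra hneg
      have : (m : ℝ) ≤ 0 := by exact_mod_cast (not_le.1 hneg).le
      nlinarith
    lift m to ℕ using hm0
    simp only [Finset.mem_biUnion, Finset.mem_filter]
    push_cast at h2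
    refine ⟨m * b n, (hJmem _).2 ⟨?_, ?_⟩, hn, dvd_mul_left _ _⟩ <;> push_cast <;> linarith
  have hfib : ∀ j ∈ J, ((S.filter fun n => b n ∣ j).card : ℝ) ≤ R ^ k := by
    intro j hj
    obtain ⟨hj1, hj2⟩ := (hJmem j).1 hj
    have hj0 : 0 < j := by
      have : (0 : ℝ) < j := by linarith
      exact_mod_cast this
    have := card_divisors_le (k := k) hj0 (R := R) (by linarith)
      ((S.filter fun n => b n ∣ j).image b) (by
        intro d hd
        obtain ⟨n, hn, rfl⟩ := Finset.mem_image.1 hd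
        rw [Finset.mem_filter] at hn
        exact ⟨hP n (hS hn.1), hn.2⟩)
    rwa [Finset.card_image_of_injOn] at this
    exact hinj.mono fun n hn => hS (Finset.mem_filter.1 hn).1
  have hRk : 0 ≤ R ^ k := by positivity
  calc (S.card : ℝ) ≤ ((J.biUnion fun j => S.filter fun n => b n ∣ j).card : ℝ) := by
        exact_mod_cast Finset.card_le_card hsub
    _ ≤ ∑ j ∈ J, ((S.filter fun n => b n ∣ j).card : ℝ) := by
        exact_mod_cast Finset.card_biUnion_le
    _ ≤ ∑ j ∈ J, R ^ k := Finset.sum_le_sum hfib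
    _ = J.card * R ^ k := by simp
    _ ≤ _ := by gcongr

/-- The decay estimate. With `B = b N / N`, if `F ^ (2k+1)` is at most a small constant times
`N / B ^ 2`, then the partial product is at most `u⁻²` for all `u` between `b N` and `exp (3 F)`.
The optimal distance in `card_bad_le` is `δ = 1 / (8 B (6 F) ^ k)`, for which at most half of the
factors can be close to `1` in absolute value. -/
lemma abs_prod_cos_le {k N : ℕ} {b : ℕ → ℕ} (hN : 1 ≤ N)
    (hP : ∀ n ∈ Finset.Icc 1 N, IsProdPrimes k (b n))
    (hinj : Set.InjOn b (Finset.Icc 1 N)) (hle : ∀ n ∈ Finset.Icc 1 N, b n ≤ b N)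
    (hNb : N ≤ b N) {F u : ℝ} (hF : 1 ≤ F)
    (hstar : 64 * (6 * F) ^ (2 * k + 1) * ((b N : ℝ) / N) ^ 2 ≤ N)
    (hu : (b N : ℝ) ≤ u) (huF : u ≤ Real.exp (3 * F)) :
    |∏ n ∈ Finset.Icc 1 N, Real.cos (π * u / b n)| ≤ 1 / u ^ 2 := by
  classical
  have hN0 : (0 : ℝ) < N := by exact_mod_cast hN
  have hbN : (N : ℝ) ≤ b N := by exact_mod_cast hNb
  have hb0 : (0 : ℝ) < b N := by linarith
  have hu0 : 0 < u := by linarith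
  set B : ℝ := (b N : ℝ) / N with hB
  have hB1 : 1 ≤ B := (one_le_div hN0).2 hbN
  set R : ℝ := 6 * F with hR
  have hR1 : 1 ≤ R := by linarith
  have hRk1 : 1 ≤ R ^ k := one_le_pow₀ hR1
  have hR2 : 2 * u ≤ 2 ^ R := by
    have h2 : (2 : ℝ) ≤ Real.exp 1 := by linarith [Real.add_one_le_exp (1 : ℝ)]
    have hl2 := Real.log_two_gt_d9
    calc 2 * u ≤ Real.exp 1 * Real.exp (3 * F) := by gcongr
      _ = Real.exp (1 + 3 * F) := by rw [Real.exp_add]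
      _ ≤ Real.exp (Real.log 2 * R) := by rw [Real.exp_le_exp]; nlinarith
      _ = 2 ^ R := by rw [Real.rpow_def_of_pos (by norm_num)]
  have hBR : 1 ≤ B * R ^ k := one_le_mul_of_one_le_of_one_le hB1 hRk1
  set δ : ℝ := 1 / (8 * (B * R ^ k)) with hδ
  have hδ0 : 0 < δ := by positivity
  have hδ1 : δ ≤ 1 / 2 := by rw [hδ, div_le_div_iff₀ (by positivity) (by norm_num)]; linarith
  set S := (Finset.Icc 1 N).filter fun n => ∃ m : ℤ, |u / b n - m| < δ with hS
  have hScard : (S.card : ℝ) ≤ N / 2 := by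
    have h1 := card_bad_le hP hinj hle hδ0 hδ1 hu0 hu (by linarith) hR2 S
      (Finset.filter_subset _ _) (fun n hn => (Finset.mem_filter.1 hn).2)
    have h2 : 2 * (δ * b N) * R ^ k = N / 4 := by
      rw [hδ, hB]; field_simp; norm_num
    have h3 : R ^ k ≤ N / 4 := by
      have h4 : R ^ k ≤ R ^ (2 * k + 1) := pow_le_pow_right₀ hR1 (by omega)
      have h5 : (1 : ℝ) ≤ B ^ 2 := one_le_pow₀ hB1
      nlinarith [pow_pos (by linarith : 0 < R) (2 * k + 1)]
    linarith
  set G := (Finset.Icc 1 N).filter fun n => ¬ ∃ m : ℤ, |u / b n - m| < δ with hG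
  have hGcard : (N : ℝ) / 2 ≤ G.card := by
    have h := Finset.card_filter_add_card_filter_not (s := Finset.Icc 1 N)
      (fun n => ∃ m : ℤ, |u / b n - m| < δ)
    rw [Nat.card_Icc, Nat.add_sub_cancel] at h
    have h' : (S.card : ℝ) + G.card = N := by exact_mod_cast h
    linarith
  have hkey : 6 * F ≤ δ ^ 2 * N := by
    have h1 : δ ^ 2 * N = N / (64 * B ^ 2 * R ^ (2 * k)) := by
      rw [hδ]; field_simp; ring
    rw [h1, le_div_iff₀ (by positivity)]
    calc 6 * F * (64 * B ^ 2 * R ^ (2 * k)) = 64 * R ^ (2 * k + 1) * B ^ 2 := by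
          rw [hR]; ring
      _ ≤ (N : ℝ) := hstar
  rw [Finset.abs_prod]
  calc ∏ n ∈ Finset.Icc 1 N, |Real.cos (π * u / b n)|
      ≤ ∏ n ∈ G, |Real.cos (π * u / b n)| := by
        refine Finset.prod_le_prod_of_subset_of_le_one (Finset.filter_subset _ _)
          (fun n _ => abs_nonneg _) (fun n _ _ => Real.abs_cos_le_one _)
    _ ≤ ∏ n ∈ G, Real.exp (-(2 * δ ^ 2)) := by
        refine Finset.prod_le_prod (fun n _ => abs_nonneg _) fun n hn => ?_
        rw [mul_div_assoc]
        refine abs_cos_pi_mul_le hδ0.le fun m => ?_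
        by_contra hlt
        exact (Finset.mem_filter.1 hn).2 ⟨m, not_le.1 hlt⟩
    _ = Real.exp (-(2 * δ ^ 2) * G.card) := by
        rw [Finset.prod_const, ← Real.exp_nat_mul, mul_comm]
    _ ≤ Real.exp (-(6 * F)) := by
        rw [Real.exp_le_exp]
        nlinarith [sq_nonneg δ]
    _ = 1 / Real.exp (3 * F) ^ 2 := by
        rw [← Real.exp_nat_mul, one_div, ← Real.exp_neg]; norm_num; ring
    _ ≤ 1 / u ^ 2 := by gcongr

/-- With `F N = max (f N) (log² N)`, the partial products are `O(u⁻²)` on the whole range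
`U ≤ u ≤ exp (3 F N)`, where `U` does not depend on `N`: as `b (N + 1) ≤ exp (3 F N)`, the ranges of
`abs_prod_cos_le` for consecutive `N` overlap, and partial products decrease in absolute value.
The term `log² N` ensures both `F N → ∞` and this overlap, and it is small enough for
`abs_prod_cos_le` since `b N = O(N ^ (5 / 4))`. -/
lemma exists_decay {k : ℕ} {b : ℕ → ℕ}
    (hP : ∀ n, 1 ≤ n → IsProdPrimes k (b n))
    (hmono : StrictMonoOn b (Set.Ici 1)) (hself : ∀ n, 1 ≤ n → n ≤ b n)
    {C : ℝ} (hC : 1 ≤ C) (hbC : ∀ n, 1 ≤ n → (b n : ℝ) ≤ C * (n : ℝ) ^ (5 / 4 : ℝ))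
    {f : ℕ → ℝ}
    (hf : Tendsto (fun N : ℕ => f N / (((N : ℝ) / ((b N : ℝ) / N) ^ 2) ^
      ((1 : ℝ) / (2 * (k : ℝ) + 1)))) atTop (nhds 0)) :
    ∃ (F : ℕ → ℝ) (U : ℝ), 1 ≤ U ∧ (∀ N, f N ≤ F N) ∧ Tendsto F atTop atTop ∧
      ∀ᶠ N in atTop, ∀ u, U ≤ u → u ≤ Real.exp (3 * F N) →
        |∏ n ∈ Finset.Icc 1 N, Real.cos (π * u / b n)| ≤ 1 / u ^ 2 := by
  set F : ℕ → ℝ := fun N => max (f N) (Real.log N ^ 2) with hF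
  set r : ℝ := (1 : ℝ) / (2 * (k : ℝ) + 1) with hr
  have hr0 : 0 < r := by positivity
  have hlog : Tendsto (fun N : ℕ => Real.log N) atTop atTop :=
    Real.tendsto_log_atTop.comp tendsto_natCast_atTop_atTop
  have hFtop : Tendsto F atTop atTop :=
    tendsto_atTop_mono (fun N => le_max_right _ _)
      ((tendsto_pow_atTop (two_ne_zero)).comp hlog)
  -- As `B = O(N ^ (1 / 4))`, the quantity `(N / B ^ 2) ^ r` grows at least like `N ^ (r / 2)`.
  have hYlow : ∀ N : ℕ, 1 ≤ N →
      (1 / C ^ 2) ^ r * (N : ℝ) ^ (r / 2) ≤ ((N : ℝ) / ((b N : ℝ) / N) ^ 2) ^ r := by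
    intro N hN
    have hN0 : (0 : ℝ) < N := by exact_mod_cast hN
    have hb0 : (0 : ℝ) < b N := by exact_mod_cast lt_of_lt_of_le hN (hself N hN)
    have h1 : ((N : ℝ) ^ (r / 2)) = ((N : ℝ) ^ (1 / 2 : ℝ)) ^ r := by
      rw [← Real.rpow_mul hN0.le]; congr 1; ring
    rw [h1, ← Real.mul_rpow (by positivity) (by positivity)]
    refine Real.rpow_le_rpow (by positivity) ?_ hr0.le
    have h2 : (b N : ℝ) / N ≤ C * (N : ℝ) ^ (1 / 4 : ℝ) := by
      rw [div_le_iff₀ hN0, mul_assoc, ← Real.rpow_add_one hN0.ne']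
      rw [show (1 / 4 + 1 : ℝ) = 5 / 4 by norm_num]
      exact hbC N hN
    have h3 : ((b N : ℝ) / N) ^ 2 ≤ C ^ 2 * (N : ℝ) ^ (1 / 2 : ℝ) := by
      calc ((b N : ℝ) / N) ^ 2 ≤ (C * (N : ℝ) ^ (1 / 4 : ℝ)) ^ 2 := by gcongr
        _ = C ^ 2 * (N : ℝ) ^ (1 / 2 : ℝ) := by
          rw [mul_pow, ← Real.rpow_mul_natCast hN0.le]; norm_num
    rw [le_div_iff₀ (by positivity)]
    calc 1 / C ^ 2 * (N : ℝ) ^ (1 / 2 : ℝ) * ((b N : ℝ) / N) ^ 2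
        ≤ 1 / C ^ 2 * (N : ℝ) ^ (1 / 2 : ℝ) * (C ^ 2 * (N : ℝ) ^ (1 / 2 : ℝ)) := by gcongr
      _ = (N : ℝ) ^ (1 / 2 : ℝ) * (N : ℝ) ^ (1 / 2 : ℝ) := by field_simp
      _ = N := by rw [← Real.rpow_add hN0]; norm_num
  -- The constant `384 = 6 * 64` matches the smallness required by `abs_prod_cos_le`.
  have hlog2 : ∀ᶠ N : ℕ in atTop,
      Real.log N ^ 2 ≤ 1 / 384 * ((N : ℝ) / ((b N : ℝ) / N) ^ 2) ^ r := by
    have h := (isLittleO_log_rpow_rpow_atTop (2 : ℝ) (half_pos hr0)).comp_tendsto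
      tendsto_natCast_atTop_atTop
    have h' := h.bound (c := 1 / 384 * (1 / C ^ 2) ^ r) (by positivity)
    filter_upwards [h', eventually_ge_atTop 1] with N h1 hN
    simp only [Function.comp_apply, Real.rpow_two] at h1
    rw [Real.norm_of_nonneg (by positivity), Real.norm_of_nonneg (by positivity)] at h1
    linarith [hYlow N hN]
  have hf' : ∀ᶠ N : ℕ in atTop, f N ≤ 1 / 384 * ((N : ℝ) / ((b N : ℝ) / N) ^ 2) ^ r := by
    filter_upwards [hf.eventually_lt_const (show (0 : ℝ) < 1 / 384 by norm_num),
      eventually_ge_atTop 1] with N h1 hN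
    have hN0 : (0 : ℝ) < N := by exact_mod_cast hN
    have hb0 : (0 : ℝ) < b N := by exact_mod_cast lt_of_lt_of_le hN (hself N hN)
    rw [div_lt_iff₀ (by positivity)] at h1
    exact h1.le
  have hgap : ∀ᶠ N : ℕ in atTop, (b (N + 1) : ℝ) ≤ Real.exp (3 * F N) := by
    filter_upwards [hlog.eventually_ge_atTop 1, hlog.eventually_ge_atTop (Real.log (4 * C)),
      eventually_ge_atTop 1] with N h1 h2 hN
    have hN1 : (1 : ℝ) ≤ N := by exact_mod_cast hN
    calc (b (N + 1) : ℝ) ≤ C * ((N + 1 : ℕ) : ℝ) ^ (5 / 4 : ℝ) := hbC _ (by omega)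
      _ ≤ C * ((N + 1 : ℕ) : ℝ) ^ (2 : ℝ) := by
        gcongr
        · push_cast; linarith
        · norm_num
      _ ≤ C * (2 * N) ^ (2 : ℝ) := by gcongr; push_cast; linarith
      _ = Real.exp (Real.log (4 * C) + 2 * Real.log N) := by
        rw [Real.exp_add, Real.exp_log (by positivity), mul_comm 2 (Real.log N), Real.exp_mul,
          Real.exp_log (by positivity), Real.rpow_two, Real.rpow_two]
        ring
      _ ≤ Real.exp (3 * F N) := by
        rw [Real.exp_le_exp]
        have : Real.log N ^ 2 ≤ F N := le_max_right _ _
        nlinarith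
  obtain ⟨N₁, hN₁⟩ := eventually_atTop.1 (hlog2.and (hf'.and (hgap.and
    ((hFtop.eventually_ge_atTop 1).and (eventually_ge_atTop 1)))))
  have hN₁1 : 1 ≤ N₁ := (hN₁ N₁ le_rfl).2.2.2.2
  have hdirect : ∀ N, N₁ ≤ N → ∀ u, (b N : ℝ) ≤ u → u ≤ Real.exp (3 * F N) →
      |∏ n ∈ Finset.Icc 1 N, Real.cos (π * u / b n)| ≤ 1 / u ^ 2 := by
    intro N hN u hu huF
    obtain ⟨h1, h2, -, h4, h5⟩ := hN₁ N hN
    have hsub : (↑(Finset.Icc 1 N) : Set ℕ) ⊆ Set.Ici 1 := fun n hn =>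
      (Finset.mem_Icc.1 (Finset.mem_coe.1 hn)).1
    refine abs_prod_cos_le h5 (fun n hn => hP n (Finset.mem_Icc.1 hn).1)
      (hmono.injOn.mono hsub)
      (fun n hn => hmono.monotoneOn (Finset.mem_Icc.1 hn).1 h5 (Finset.mem_Icc.1 hn).2)
      (hself N h5) h4 ?_ hu huF
    have hN0 : (0 : ℝ) < N := by exact_mod_cast h5
    have hb0 : (0 : ℝ) < b N := by exact_mod_cast lt_of_lt_of_le h5 (hself N h5)
    set Z : ℝ := (N : ℝ) / ((b N : ℝ) / N) ^ 2 with hZ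
    have hZ0 : 0 < Z := by positivity
    have hFle : F N ≤ 1 / 384 * Z ^ r := max_le h2 h1
    have hpow : (Z ^ r) ^ (2 * k + 1) = Z := by
      rw [← Real.rpow_mul_natCast hZ0.le, hr]
      push_cast
      rw [one_div_mul_cancel (by positivity), Real.rpow_one]
    have h6 : (6 * F N) ^ (2 * k + 1) ≤ 1 / 64 * Z := by
      calc (6 * F N) ^ (2 * k + 1) ≤ (1 / 64 * Z ^ r) ^ (2 * k + 1) := by
            have h7 : 6 * F N ≤ 1 / 64 * Z ^ r := by linarith
            exact pow_le_pow_left₀ (by linarith) h7 _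
        _ = (1 / 64) ^ (2 * k + 1) * Z := by rw [mul_pow, hpow]
        _ ≤ (1 / 64) ^ 1 * Z := by
            gcongr ?_ * _
            exact pow_le_pow_of_le_one (by norm_num) (by norm_num) (by omega)
        _ = 1 / 64 * Z := by norm_num
    calc 64 * (6 * F N) ^ (2 * k + 1) * ((b N : ℝ) / N) ^ 2
        ≤ 64 * (1 / 64 * Z) * ((b N : ℝ) / N) ^ 2 := by gcongr
      _ = (N : ℝ) := by rw [hZ]; field_simp
  refine ⟨F, b N₁, ?_, fun N => le_max_left _ _, hFtop, ?_⟩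
  · exact_mod_cast hN₁1.trans (hself N₁ hN₁1)
  filter_upwards [eventually_ge_atTop N₁] with N hN
  induction N, hN using Nat.le_induction with
  | base => exact fun u hu huF => hdirect N₁ le_rfl u hu huF
  | succ N hN ih =>
    intro u hu huF
    rcases le_or_gt (b (N + 1) : ℝ) u with h | h
    · exact hdirect (N + 1) (by omega) u h huF
    · refine le_trans ?_ (ih u hu (h.le.trans (hN₁ N hN).2.2.1))
      rw [Finset.prod_Icc_succ_top (by omega), abs_mul]
      exact mul_le_of_le_one_right (abs_nonneg _) (Real.abs_cos_le_one _)

/-! ### Fourier smoothing -/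

section

open scoped FourierTransform ContDiff

/-- A smoothing kernel: a nonnegative continuous function of integral `1` supported in `[-1, 1]`,
which is the inverse Fourier transform of a continuous function `φ` with `φ u = O(u⁻⁴)`. -/
lemma exists_kernel : ∃ (K : ℝ → ℝ) (φ : ℝ → ℂ) (C : ℝ),
    Continuous K ∧ (∀ z, 0 ≤ K z) ∧ (∀ z, 1 ≤ |z| → K z = 0) ∧ ∫ z, K z = 1 ∧
    Continuous φ ∧ φ 0 = 1 ∧ (∀ u, ‖φ u‖ ≤ 1) ∧ 0 < C ∧ (∀ u, u ^ 4 * ‖φ u‖ ≤ C) ∧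
    Integrable φ ∧
    ∀ z, (K z : ℂ) = ∫ u : ℝ, Complex.exp ((2 * π * u * z : ℝ) * Complex.I) * φ u := by
  let β : ContDiffBump (0 : ℝ) := ⟨1 / 2, 1, by norm_num, by norm_num⟩
  set K : ℝ → ℝ := β.normed volume with hK
  have hKc : Continuous K := β.continuous_normed
  have hKi : Integrable K := β.integrable_normed
  have hK0 : ∀ z, 0 ≤ K z := fun z => β.nonneg_normed z
  have hK1 : ∫ z, K z = 1 := β.integral_normed
  have hsupp : HasCompactSupport (fun z => (K z : ℂ)) :=
    (β.hasCompactSupport_normed (μ := volume)).comp_left (g := fun x : ℝ => (x : ℂ)) (by simp)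
  have hsm : ContDiff ℝ ∞ (fun z => (K z : ℂ)) :=
    Complex.ofRealCLM.contDiff.comp (β.contDiff_normed (μ := volume))
  let S : SchwartzMap ℝ ℂ := hsupp.toSchwartzMap hsm
  have hS : (S : ℝ → ℂ) = fun z => (K z : ℂ) := rfl
  have hφ : ((𝓕 S : SchwartzMap ℝ ℂ) : ℝ → ℂ) = 𝓕 (fun z => (K z : ℂ)) := by
    rw [SchwartzMap.fourier_coe, hS]
  obtain ⟨C, hC, hdec⟩ := (𝓕 S : SchwartzMap ℝ ℂ).decay 4 0
  have hint : Integrable (𝓕 (fun z => (K z : ℂ))) := by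
    rw [← hφ]; exact (𝓕 S : SchwartzMap ℝ ℂ).integrable
  refine ⟨K, 𝓕 (fun z => (K z : ℂ)), C, hKc, hK0, ?_, hK1, ?_, ?_, ?_, hC, ?_, hint, ?_⟩
  · intro z hz
    have : z ∉ Function.support K := by
      rw [hK, β.support_normed_eq]
      simpa using hz
    exact Function.notMem_support.1 this
  · rw [← hφ]; exact (𝓕 S : SchwartzMap ℝ ℂ).continuous
  · rw [Real.fourier_real_eq_integral_exp_smul]
    simp only [mul_zero, Complex.ofReal_zero, zero_mul, Complex.exp_zero, one_smul]
    rw [integral_complex_ofReal, hK1, Complex.ofReal_one]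
  · intro u
    rw [Real.fourier_real_eq_integral_exp_smul]
    refine (norm_integral_le_integral_norm _).trans ?_
    rw [← hK1]
    refine le_of_eq (integral_congr_ae (Eventually.of_forall fun v => ?_))
    simp only [norm_smul, Complex.norm_exp_ofReal_mul_I, one_mul, Complex.norm_real]
    exact Real.norm_of_nonneg (hK0 v)
  · intro u
    have := hdec u
    rw [norm_iteratedFDeriv_zero, hφ] at this
    rwa [Real.norm_eq_abs, Even.pow_abs (by decide)] at this
  · intro z
    have h := Continuous.fourierInv_fourier_eq (f := fun z => (K z : ℂ)) (by fun_prop)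
      hKi.ofReal hint
    have h' := congrFun h z
    rw [Real.fourierInv_eq'] at h'
    rw [← h']
    refine integral_congr_ae (Eventually.of_forall fun u => ?_)
    simp only [smul_eq_mul]
    congr 4
    simp [mul_comm, mul_assoc]

/-- The density of `X + η Y`, for `X` uniform on a finite set and `Y` of density `K`, in terms of
the characteristic function `ψ` of `X`. -/
lemma smoothed_density {Ω : Type*} [Fintype Ω] [Nonempty Ω] (X : Ω → ℝ) {ψ : ℝ → ℝ}
    (hψ : ∀ u : ℝ, ∑ w, Complex.exp ((2 * π * u * X w : ℝ) * Complex.I) = Fintype.card Ω * ψ u)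
    {K : ℝ → ℝ} {φ : ℝ → ℂ} (hφ : Integrable φ)
    (hK : ∀ z, (K z : ℂ) = ∫ u : ℝ, Complex.exp ((2 * π * u * z : ℝ) * Complex.I) * φ u)
    {η : ℝ} (hη : 0 < η) (y : ℝ) :
    (((Fintype.card Ω : ℝ)⁻¹ * ∑ w, η⁻¹ * K ((X w - y) / η) : ℝ) : ℂ) =
      ∫ u : ℝ, Complex.exp ((-(2 * π * u * y) : ℝ) * Complex.I) * (φ (η * u) * ψ u) := by
  have hφη : Integrable fun u => φ (η * u) := hφ.comp_mul_left' hη.ne'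
  have hscale : ∀ z : ℝ, ((η⁻¹ * K (z / η) : ℝ) : ℂ) =
      ∫ u : ℝ, Complex.exp ((2 * π * u * z : ℝ) * Complex.I) * φ (η * u) := by
    intro z
    have h := Measure.integral_comp_mul_left
      (fun v : ℝ => Complex.exp ((2 * π * v * (z / η) : ℝ) * Complex.I) * φ v) η
    rw [← hK, abs_of_pos (inv_pos.2 hη), Complex.real_smul] at h
    rw [Complex.ofReal_mul, ← h]
    refine integral_congr_ae (Eventually.of_forall fun u => ?_)
    have : 2 * π * (η * u) * (z / η) = 2 * π * u * z := by field_simp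
    simp only [this]
  have hcard : (Fintype.card Ω : ℂ) ≠ 0 := by exact_mod_cast Fintype.card_ne_zero
  rw [Complex.ofReal_mul, Complex.ofReal_sum]
  simp_rw [hscale]
  rw [← integral_finsetSum, ← integral_const_mul]
  · refine integral_congr_ae (Eventually.of_forall fun u => ?_)
    simp only
    rw [← Finset.sum_mul]
    have : ∑ w, Complex.exp ((2 * π * u * (X w - y) : ℝ) * Complex.I) =
        Complex.exp ((-(2 * π * u * y) : ℝ) * Complex.I) * (Fintype.card Ω * ψ u) := by
      rw [← hψ, Finset.mul_sum]
      refine Finset.sum_congr rfl fun w _ => ?_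
      rw [← Complex.exp_add]
      congr 1
      push_cast; ring
    rw [this]
    push_cast
    field_simp
  · intro w _
    refine hφη.bdd_mul (c := 1) (by fun_prop) (Eventually.of_forall fun u => ?_)
    rw [Complex.norm_exp_ofReal_mul_I]

end

/-- The mass that the kernel of width `η` centred at `x` puts on `[l, r]`: all of it if `x` is at
least `η` inside the interval, none of it if `x` is at least `η` outside. -/
lemma kernel_interval {K : ℝ → ℝ} (hK0 : ∀ z, 0 ≤ K z)
    (hKs : ∀ z, 1 ≤ |z| → K z = 0) (hK1 : ∫ z, K z = 1) {η : ℝ} (hη : 0 < η) (x : ℝ)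
    {l r : ℝ} (hlr : l ≤ r) :
    0 ≤ (∫ y in l..r, η⁻¹ * K ((x - y) / η)) ∧ (∫ y in l..r, η⁻¹ * K ((x - y) / η)) ≤ 1 ∧
    (l + η ≤ x → x ≤ r - η → ∫ y in l..r, η⁻¹ * K ((x - y) / η) = 1) ∧
    ((x ≤ l - η ∨ r + η ≤ x) → ∫ y in l..r, η⁻¹ * K ((x - y) / η) = 0) := by
  have hKi : Integrable K := by
    by_contra h
    rw [integral_undef h] at hK1
    exact zero_ne_one hK1
  have h0 : ∀ y, 0 ≤ η⁻¹ * K ((x - y) / η) := fun y => mul_nonneg (inv_nonneg.2 hη.le) (hK0 _)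
  have hi : Integrable fun y => η⁻¹ * K ((x - y) / η) :=
    ((hKi.comp_div hη.ne').comp_sub_left x).const_mul _
  have h1 : ∫ y, η⁻¹ * K ((x - y) / η) = 1 := by
    rw [integral_const_mul, integral_sub_left_eq_self (fun y => K (y / η)) volume x,
      Measure.integral_comp_div, hK1, abs_of_pos hη, smul_eq_mul, mul_one, inv_mul_cancel₀ hη.ne']
  have hbig : ∀ z : ℝ, η ≤ |z| → K (z / η) = 0 := fun z hz => hKs _ (by
    rwa [abs_div, abs_of_pos hη, one_le_div hη])
  refine ⟨intervalIntegral.integral_nonneg hlr fun y _ => h0 y, ?_, fun hl hr => ?_, fun h => ?_⟩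
  · rw [intervalIntegral.integral_of_le hlr, ← h1]
    exact setIntegral_le_integral hi (Eventually.of_forall h0)
  · rw [intervalIntegral.integral_of_le hlr, ← h1]
    refine setIntegral_eq_integral_of_forall_compl_eq_zero fun y hy => ?_
    rw [Set.mem_Ioc, not_and_or, not_lt, not_le] at hy
    rw [hbig, mul_zero]
    rcases hy with hy | hy
    · exact le_abs.2 (Or.inl (by linarith))
    · exact le_abs.2 (Or.inr (by linarith))
  · rw [intervalIntegral.integral_congr (g := fun _ => 0), intervalIntegral.integral_zero]
    intro y hy
    rw [Set.uIcc_of_le hlr, Set.mem_Icc] at hy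
    simp only
    rw [hbig, mul_zero]
    rcases h with h | h
    · exact le_abs.2 (Or.inr (by linarith))
    · exact le_abs.2 (Or.inl (by linarith))

/-- If the density of `X + η Y` is within `e` of `g`, where `|Y| ≤ 1`, then `ℙ[X ∈ [a, c]]` is close
to `∫_[a,c] g`: the event `X ∈ [a, c]` is sandwiched between the events that `X + η Y` lies in
`[a + η, c - η]` and in `[a - η, c + η]`. -/
lemma prob_sub_integral_le {Ω : Type*} [Fintype Ω] [Nonempty Ω] (X : Ω → ℝ)
    {K : ℝ → ℝ} (hKc : Continuous K) (hK0 : ∀ z, 0 ≤ K z)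
    (hKs : ∀ z, 1 ≤ |z| → K z = 0) (hK1 : ∫ z, K z = 1) {η : ℝ} (hη : 0 < η)
    {g : ℝ → ℝ} (hg : Continuous g) {G e : ℝ} (hG : ∀ y, |g y| ≤ G)
    (hclose : ∀ y, |(Fintype.card Ω : ℝ)⁻¹ * ∑ w, η⁻¹ * K ((X w - y) / η) - g y| ≤ e)
    {a c : ℝ} (hac : 2 * η ≤ c - a) :
    |(Nat.card {w : Ω // X w ∈ Set.Icc a c} : ℝ) / Fintype.card Ω - ∫ x in Set.Icc a c, g x| ≤
      2 * η * G + (c - a + 2 * η) * e := by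
  classical
  set h : ℝ → ℝ := fun y => (Fintype.card Ω : ℝ)⁻¹ * ∑ w, η⁻¹ * K ((X w - y) / η) with hh
  have hhc : Continuous h := by rw [hh]; fun_prop
  have hcard : (0 : ℝ) < Fintype.card Ω := by exact_mod_cast Fintype.card_pos
  have he : 0 ≤ e := (abs_nonneg _).trans (hclose 0)
  have hsum : ∀ l r, ∫ y in l..r, h y =
      (Fintype.card Ω : ℝ)⁻¹ * ∑ w, ∫ y in l..r, η⁻¹ * K ((X w - y) / η) := by
    intro l r
    rw [hh, intervalIntegral.integral_const_mul, intervalIntegral.integral_finsetSum]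
    intro w _
    exact Continuous.intervalIntegrable (by fun_prop) _ _
  have hnat : (Nat.card {w : Ω // X w ∈ Set.Icc a c} : ℝ) =
      ∑ w, if X w ∈ Set.Icc a c then (1 : ℝ) else 0 := by
    rw [Nat.card_eq_fintype_card, Fintype.card_subtype, Finset.sum_boole]
  set p : ℝ := (Nat.card {w : Ω // X w ∈ Set.Icc a c} : ℝ) / Fintype.card Ω with hp
  have hp' : p = (Fintype.card Ω : ℝ)⁻¹ * ∑ w, if X w ∈ Set.Icc a c then (1 : ℝ) else 0 := by
    rw [hp, hnat, div_eq_inv_mul]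
  have hupper : p ≤ ∫ y in (a - η)..(c + η), h y := by
    rw [hp', hsum]
    gcongr with w
    obtain ⟨h0, -, h1, -⟩ := kernel_interval hK0 hKs hK1 hη (X w)
      (show a - η ≤ c + η by linarith)
    split_ifs with hw
    · exact (h1 (by linarith [hw.1]) (by linarith [hw.2])).ge
    · exact h0
  have hlower : ∫ y in (a + η)..(c - η), h y ≤ p := by
    rw [hp', hsum]
    gcongr with w
    obtain ⟨-, h1, -, h0⟩ := kernel_interval hK0 hKs hK1 hη (X w)
      (show a + η ≤ c - η by linarith)
    split_ifs with hw
    · exact h1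
    · refine (h0 ?_).le
      rw [Set.mem_Icc, not_and_or, not_le, not_le] at hw
      rcases hw with hw | hw
      · exact Or.inl (by linarith)
      · exact Or.inr (by linarith)
  have hgi : ∀ l r, IntervalIntegrable g volume l r := fun l r => hg.intervalIntegrable _ _
  have hdiff : ∀ l r, l ≤ r → |(∫ y in l..r, h y) - ∫ y in l..r, g y| ≤ e * (r - l) := by
    intro l r hlr
    rw [← intervalIntegral.integral_sub (hhc.intervalIntegrable _ _) (hgi _ _)]
    have := intervalIntegral.norm_integral_le_of_norm_le_const (a := l) (b := r) (C := e)
      (f := fun y => h y - g y) (fun y _ => hclose y)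
    rwa [abs_of_nonneg (by linarith : 0 ≤ r - l)] at this
  have hsmall : ∀ l r, l ≤ r → |∫ y in l..r, g y| ≤ G * (r - l) := by
    intro l r hlr
    have := intervalIntegral.norm_integral_le_of_norm_le_const (a := l) (b := r) (C := G)
      (f := g) (fun y _ => hG y)
    rwa [abs_of_nonneg (by linarith : 0 ≤ r - l)] at this
  have hI : ∫ x in Set.Icc a c, g x = ∫ x in a..c, g x := by
    rw [intervalIntegral.integral_of_le (by linarith), integral_Icc_eq_integral_Ioc]
  rw [hI, abs_le]
  have d1 := abs_le.1 (hdiff (a - η) (c + η) (by linarith))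
  have d2 := abs_le.1 (hdiff (a + η) (c - η) (by linarith))
  have s1 := abs_le.1 (hsmall (a - η) a (by linarith))
  have s2 := abs_le.1 (hsmall c (c + η) (by linarith))
  have s3 := abs_le.1 (hsmall a (a + η) (by linarith))
  have s4 := abs_le.1 (hsmall (c - η) c (by linarith))
  have e1 : (∫ y in (a - η)..(c + η), g y) =
      (∫ y in (a - η)..a, g y) + (∫ y in a..c, g y) + ∫ y in c..(c + η), g y := by
    rw [intervalIntegral.integral_add_adjacent_intervals (hgi _ _) (hgi _ _),
      intervalIntegral.integral_add_adjacent_intervals (hgi _ _) (hgi _ _)]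
  have e2 : (∫ y in a..c, g y) =
      (∫ y in a..(a + η), g y) + (∫ y in (a + η)..(c - η), g y) + ∫ y in (c - η)..c, g y := by
    rw [intervalIntegral.integral_add_adjacent_intervals (hgi _ _) (hgi _ _),
      intervalIntegral.integral_add_adjacent_intervals (hgi _ _) (hgi _ _)]
  constructor <;> nlinarith

/-! ### The local limit theorem -/

/-- The Fourier-side error of replacing `ψN N` by its limit `ψ`, weighted by the transform of a
kernel of width `η ≥ δ exp (-F N)`. Below the cutoff `exp (3 F N) / 2` this tends to zero by
dominated convergence; above it the factor `φ (η u) = O((η u)⁻⁴)` is small. -/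
lemma eventually_integral_le {ψN : ℕ → ℝ → ℝ} {ψ : ℝ → ℝ} (hc : ∀ N, Continuous (ψN N))
    (hlim : ∀ u, Tendsto (fun N => ψN N u) atTop (nhds (ψ u))) (h1 : ∀ N u, |ψN N u| ≤ 1)
    (hψ1 : ∀ u, |ψ u| ≤ 1) (hψm : Measurable ψ)
    {F : ℕ → ℝ} (hF : Tendsto F atTop atTop) {A : ℝ} (hA : 0 ≤ A)
    (hdec : ∀ᶠ N in atTop, ∀ u, |u| ≤ Real.exp (3 * F N) / 2 → |ψN N u| ≤ A * (1 + u ^ 2)⁻¹)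
    (hψdec : ∀ u, |ψ u| ≤ A * (1 + u ^ 2)⁻¹)
    {φ : ℝ → ℂ} (hφ1 : ∀ u, ‖φ u‖ ≤ 1) {C : ℝ} (hC : 0 < C) (hφ4 : ∀ u, u ^ 4 * ‖φ u‖ ≤ C)
    {δ e : ℝ} (hδ : 0 < δ) (he : 0 < e) :
    ∀ᶠ N in atTop, ∀ η, δ * Real.exp (-F N) ≤ η →
      ∫ u, ‖φ (η * u)‖ * |ψN N u - ψ u| ≤ e := by
  set D : ℝ := 16 * C * (δ ^ 4)⁻¹ with hD
  have hD0 : 0 ≤ D := by positivity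
  have hqpos : ∀ u : ℝ, 0 < (1 + u ^ 2)⁻¹ := fun u => by positivity
  set E : ℕ → ℝ → ℝ := fun N u =>
    Set.indicator {u : ℝ | |u| ≤ Real.exp (3 * F N) / 2} (fun u => |ψN N u - ψ u|) u +
      D * Real.exp (-(2 * F N)) * (1 + u ^ 2)⁻¹ with hE
  have hEm : ∀ N, Measurable (E N) := by
    intro N
    refine Measurable.add (Measurable.indicator ?_ ?_) ?_
    · exact continuous_abs.measurable.comp ((hc N).measurable.sub hψm)
    · exact measurableSet_le continuous_abs.measurable measurable_const
    · fun_prop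
  have hE0 : ∀ N u, 0 ≤ E N u := fun N u =>
    add_nonneg (Set.indicator_nonneg (fun _ _ => abs_nonneg _) _)
      (mul_nonneg (mul_nonneg hD0 (Real.exp_pos _).le) (hqpos u).le)
  have hbi : Integrable fun u : ℝ => (2 * A + D) * (1 + u ^ 2)⁻¹ :=
    integrable_inv_one_add_sq.const_mul _
  have hEb : ∀ᶠ N in atTop, ∀ u, ‖E N u‖ ≤ (2 * A + D) * (1 + u ^ 2)⁻¹ := by
    filter_upwards [hdec, hF.eventually_ge_atTop 1] with N hN hF1 u
    rw [Real.norm_of_nonneg (hE0 N u), add_mul]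
    refine add_le_add ?_ ?_
    · refine Set.indicator_apply_le' (fun hu => ?_) fun _ => ?_
      · have := hN u hu
        have := hψdec u
        have := abs_sub (ψN N u) (ψ u)
        linarith
      · exact mul_nonneg (by linarith) (hqpos u).le
    · gcongr ?_ * _
      exact mul_le_of_le_one_right hD0 (Real.exp_le_one_iff.2 (by linarith))
  have hElim : ∀ u, Tendsto (fun N => E N u) atTop (nhds 0) := by
    intro u
    rw [← add_zero (0 : ℝ)]
    refine Tendsto.add ?_ ?_
    · refine squeeze_zero (g := fun N => |ψN N u - ψ u|)
        (fun N => Set.indicator_nonneg (fun _ _ => abs_nonneg _) _)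
        (fun N => Set.indicator_apply_le' (fun _ => le_rfl) fun _ => abs_nonneg _) ?_
      have := ((hlim u).sub_const (ψ u)).abs
      simpa using this
    · have h2 : Tendsto (fun N => Real.exp (-(2 * F N))) atTop (nhds 0) :=
        Real.tendsto_exp_neg_atTop_nhds_zero.comp (hF.const_mul_atTop (by norm_num))
      simpa using (h2.const_mul D).mul_const ((1 + u ^ 2)⁻¹)
  have hint : Tendsto (fun N => ∫ u, E N u) atTop (nhds 0) := by
    have := tendsto_integral_filter_of_dominated_convergence (l := atTop)
      (F := E) (f := fun _ => (0 : ℝ)) (μ := volume) _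
      (Eventually.of_forall fun N => (hEm N).aestronglyMeasurable)
      (hEb.mono fun N h => Eventually.of_forall h) hbi
      (Eventually.of_forall hElim)
    simpa using this
  filter_upwards [hint.eventually_le_const he, hEb, hF.eventually_ge_atTop 1] with N h2 h3 hF1 η hη
  refine (integral_mono_of_nonneg (Eventually.of_forall fun u => by positivity)
    (hbi.mono' (hEm N).aestronglyMeasurable (Eventually.of_forall h3))
    (Eventually.of_forall fun u => ?_)).trans h2
  show ‖φ (η * u)‖ * |ψN N u - ψ u| ≤ E N u
  rcases le_or_gt |u| (Real.exp (3 * F N) / 2) with hu | hu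
  · refine le_add_of_le_of_nonneg ?_ (mul_nonneg (mul_nonneg hD0 (Real.exp_pos _).le) (hqpos u).le)
    rw [Set.indicator_of_mem (by exact hu)]
    exact mul_le_of_le_one_left (abs_nonneg _) (hφ1 _)
  · refine le_add_of_nonneg_of_le (Set.indicator_nonneg (fun _ _ => abs_nonneg _) _) ?_
    have hexp : 2 ≤ Real.exp (3 * F N) := by
      linarith [Real.add_one_le_exp (3 * F N)]
    have hu1 : 1 ≤ u ^ 2 := by
      rw [← sq_abs]; exact one_le_pow₀ (by linarith)
    have hu2 : Real.exp (6 * F N) / 4 ≤ u ^ 2 := by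
      rw [← sq_abs]
      calc Real.exp (6 * F N) / 4 = (Real.exp (3 * F N) / 2) ^ 2 := by
            rw [div_pow, ← Real.exp_nat_mul]; norm_num; ring_nf
        _ ≤ |u| ^ 2 := by gcongr
    have hη4 : δ ^ 4 * Real.exp (-(4 * F N)) ≤ η ^ 4 := by
      calc δ ^ 4 * Real.exp (-(4 * F N)) = (δ * Real.exp (-F N)) ^ 4 := by
            rw [mul_pow, ← Real.exp_nat_mul]; norm_num
        _ ≤ η ^ 4 := by gcongr
    have hprod : δ ^ 4 * Real.exp (2 * F N) * (1 + u ^ 2) / 8 ≤ (η * u) ^ 4 := by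
      calc δ ^ 4 * Real.exp (2 * F N) * (1 + u ^ 2) / 8
          = (δ ^ 4 * Real.exp (-(4 * F N))) * ((Real.exp (6 * F N) / 4) * ((1 + u ^ 2) / 2)) := by
            rw [show 2 * F N = -(4 * F N) + 6 * F N by ring, Real.exp_add]; ring
        _ ≤ η ^ 4 * (u ^ 2 * u ^ 2) := by
            gcongr; linarith
        _ = (η * u) ^ 4 := by ring
    have h4 := hφ4 (η * u)
    have h5 : |ψN N u - ψ u| ≤ 2 := by
      have := abs_sub (ψN N u) (ψ u)
      linarith [h1 N u, hψ1 u]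
    have h6 : ‖φ (η * u)‖ ≤ 8 * C * (δ ^ 4)⁻¹ * Real.exp (-(2 * F N)) * (1 + u ^ 2)⁻¹ := by
      have h7 : δ ^ 4 * Real.exp (2 * F N) * (1 + u ^ 2) / 8 * ‖φ (η * u)‖ ≤ C :=
        (mul_le_mul_of_nonneg_right hprod (norm_nonneg _)).trans h4
      rw [Real.exp_neg]
      have h8 : 8 * C * (δ ^ 4)⁻¹ * (Real.exp (2 * F N))⁻¹ * (1 + u ^ 2)⁻¹ =
          C / (δ ^ 4 * Real.exp (2 * F N) * (1 + u ^ 2) / 8) := by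
        field_simp
      rw [h8, le_div_iff₀ (by positivity), mul_comm]
      exact h7
    calc ‖φ (η * u)‖ * |ψN N u - ψ u|
        ≤ (8 * C * (δ ^ 4)⁻¹ * Real.exp (-(2 * F N)) * (1 + u ^ 2)⁻¹) * 2 := by gcongr
      _ = D * Real.exp (-(2 * F N)) * (1 + u ^ 2)⁻¹ := by rw [hD]; ring

/-- The effect of smoothing the limit density at width `η` is negligible as `η → 0`. -/
lemma exists_smoothing_width {ψ : ℝ → ℝ} (hψi : Integrable ψ)
    {φ : ℝ → ℂ} (hφc : Continuous φ) (hφ0 : φ 0 = 1) (hφ1 : ∀ u, ‖φ u‖ ≤ 1) {e : ℝ} (he : 0 < e) :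
    ∃ δ, 0 < δ ∧ ∀ η, 0 < η → η ≤ δ → ∫ u, ‖φ (η * u) - 1‖ * |ψ u| ≤ e := by
  have h : Tendsto (fun η : ℝ => ∫ u, ‖φ (η * u) - 1‖ * |ψ u|) (nhds 0) (nhds 0) := by
    have := tendsto_integral_filter_of_dominated_convergence (l := nhds (0 : ℝ)) (μ := volume)
      (F := fun η u => ‖φ (η * u) - 1‖ * |ψ u|) (f := fun _ => (0 : ℝ)) (fun u => 2 * |ψ u|)
      (Eventually.of_forall fun η => ?_) (Eventually.of_forall fun η =>
        Eventually.of_forall fun u => ?_) (hψi.abs.const_mul 2) (Eventually.of_forall fun u => ?_)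
    · simpa using this
    · have hh : Continuous fun u : ℝ => ‖φ (η * u) - 1‖ := by fun_prop
      exact hh.aestronglyMeasurable.mul hψi.abs.aestronglyMeasurable
    · rw [Real.norm_of_nonneg (by positivity)]
      gcongr
      have := norm_sub_le (φ (η * u)) 1
      rw [norm_one] at this
      linarith [hφ1 (η * u)]
    · have hh : Continuous fun η : ℝ => ‖φ (η * u) - 1‖ * |ψ u| := by fun_prop
      have := hh.tendsto 0
      simpa [hφ0] using this
  obtain ⟨r, hr, hball⟩ := Metric.eventually_nhds_iff.1 (h.eventually_le_const he)
  refine ⟨r / 2, by positivity, fun η h0 h1 => hball ?_⟩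
  rw [Real.dist_eq, sub_zero, abs_of_pos h0]
  linarith

/-- For even `ψ`, the cosine integral defining the density is the full Fourier integral of `ψ`. -/
lemma integral_cos_eq {ψ : ℝ → ℝ} (hψi : Integrable ψ) (heven : ∀ u, ψ (-u) = ψ u) (y : ℝ) :
    2 * ∫ u in Set.Ioi (0 : ℝ), Real.cos (2 * π * u * y) * ψ u =
      (∫ u : ℝ, Complex.exp ((-(2 * π * u * y) : ℝ) * Complex.I) * (ψ u : ℂ)).re := by
  rw [← integral_comp_abs (f := fun u => Real.cos (2 * π * u * y) * ψ u)]
  have hi : Integrable fun u : ℝ => Complex.exp ((-(2 * π * u * y) : ℝ) * Complex.I) * (ψ u : ℂ) :=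
    hψi.ofReal.bdd_mul (c := 1) (by fun_prop) (Eventually.of_forall fun u => by
      rw [Complex.norm_exp_ofReal_mul_I])
  have h := integral_re hi
  rw [RCLike.re_eq_complex_re] at h
  rw [← h]
  refine integral_congr_ae (Eventually.of_forall fun u => ?_)
  simp only
  rw [Complex.re_mul_ofReal, Complex.exp_ofReal_mul_I_re, Real.cos_neg]
  rcases abs_cases u with ⟨h, -⟩ | ⟨h, -⟩
  · rw [h]
  · rw [h, heven, show 2 * π * -u * y = -(2 * π * u * y) by ring, Real.cos_neg]

lemma continuous_density {ψ : ℝ → ℝ} (hψi : Integrable ψ) :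
    Continuous fun y : ℝ =>
      (∫ u : ℝ, Complex.exp ((-(2 * π * u * y) : ℝ) * Complex.I) * (ψ u : ℂ)).re := by
  refine Complex.continuous_re.comp (continuous_of_dominated (bound := fun u => |ψ u|) ?_ ?_
    hψi.abs ?_)
  · intro y
    have hh : Continuous fun u : ℝ => Complex.exp ((-(2 * π * u * y) : ℝ) * Complex.I) := by
      fun_prop
    exact hh.aestronglyMeasurable.mul hψi.ofReal.aestronglyMeasurable
  · intro y
    refine Eventually.of_forall fun u => ?_
    rw [norm_mul, Complex.norm_exp_ofReal_mul_I, one_mul, Complex.norm_real, Real.norm_eq_abs]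
  · exact Eventually.of_forall fun u => by fun_prop

/-- A quantitative local limit theorem: if the characteristic functions `ψN N` of `X N` converge
pointwise to `ψ` and are `O(u⁻²)` uniformly for `|u| ≤ exp (3 F N) / 2`, then `X N` is
equidistributed with respect to the density with characteristic function `ψ`, uniformly on intervals
longer than `exp (-F N)`. -/
lemma eventually_prob_sub_integral_le {Ω : ℕ → Type*} [∀ N, Fintype (Ω N)] [∀ N, Nonempty (Ω N)]
    (X : ∀ N, Ω N → ℝ) {ψN : ℕ → ℝ → ℝ} {ψ : ℝ → ℝ}
    (hchar : ∀ N, ∀ u : ℝ, ∑ w, Complex.exp ((2 * π * u * X N w : ℝ) * Complex.I) =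
      Fintype.card (Ω N) * ψN N u)
    (hc : ∀ N, Continuous (ψN N)) (hlim : ∀ u, Tendsto (fun N => ψN N u) atTop (nhds (ψ u)))
    (h1 : ∀ N u, |ψN N u| ≤ 1) (heven : ∀ N u, ψN N (-u) = ψN N u)
    {F : ℕ → ℝ} (hF : Tendsto F atTop atTop) {A : ℝ} (hA : 0 ≤ A)
    (hdec : ∀ᶠ N in atTop, ∀ u, |u| ≤ Real.exp (3 * F N) / 2 → |ψN N u| ≤ A * (1 + u ^ 2)⁻¹)
    {ε : ℝ} (hε : 0 < ε) :
    ∀ᶠ N in atTop, ∀ a c : ℝ, Real.exp (-F N) < c - a →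
      |(Nat.card {w : Ω N // X N w ∈ Set.Icc a c} : ℝ) / Fintype.card (Ω N) -
        ∫ x in Set.Icc a c, (2 * ∫ u in Set.Ioi (0 : ℝ), Real.cos (2 * π * u * x) * ψ u)| ≤
      ε * (c - a) := by
  have hψeven : ∀ u, ψ (-u) = ψ u := fun u =>
    tendsto_nhds_unique (hlim (-u)) (by simpa only [heven] using hlim u)
  have hψ1 : ∀ u, |ψ u| ≤ 1 := fun u =>
    le_of_tendsto (hlim u).abs (Eventually.of_forall fun N => h1 N u)
  have hψm : Measurable ψ :=
    measurable_of_tendsto_metrizable (fun N => (hc N).measurable) (tendsto_pi_nhds.2 hlim)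
  have hexp : Tendsto (fun N => Real.exp (3 * F N) / 2) atTop atTop :=
    (Real.tendsto_exp_atTop.comp (hF.const_mul_atTop (by norm_num))).atTop_div_const (by norm_num)
  have hψdec : ∀ u, |ψ u| ≤ A * (1 + u ^ 2)⁻¹ := by
    intro u
    refine le_of_tendsto (hlim u).abs ?_
    filter_upwards [hdec, hexp.eventually_ge_atTop |u|] with N h2 h3
    exact h2 u h3
  have hψi : Integrable ψ :=
    (integrable_inv_one_add_sq.const_mul A).mono' hψm.aestronglyMeasurable
      (Eventually.of_forall hψdec)
  obtain ⟨K, φ, C, hKc, hK0, hKs, hK1, hφc, hφ0, hφ1, hC, hφ4, hφi, hK⟩ := exists_kernel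
  set G : ℝ := ∫ u, |ψ u| with hG
  have hG0 : 0 ≤ G := integral_nonneg fun u => abs_nonneg _
  set g : ℝ → ℝ := fun y =>
    (∫ u : ℝ, Complex.exp ((-(2 * π * u * y) : ℝ) * Complex.I) * (ψ u : ℂ)).re with hg
  have hgc : Continuous g := continuous_density hψi
  have hgG : ∀ y, |g y| ≤ G := by
    intro y
    refine (Complex.abs_re_le_norm _).trans ((norm_integral_le_integral_norm _).trans_eq ?_)
    refine integral_congr_ae (Eventually.of_forall fun u => ?_)
    simp only
    rw [norm_mul, Complex.norm_exp_ofReal_mul_I, one_mul, Complex.norm_real, Real.norm_eq_abs]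
  obtain ⟨δ₀, hδ₀, hwidth⟩ := exists_smoothing_width hψi hφc hφ0 hφ1 (e := ε / 8) (by positivity)
  -- The last bound makes the boundary layers of width `2 η` cost at most `ε (c - a) / 2`.
  obtain ⟨δ, hδ, hδ1, hδ2, hδ3⟩ : ∃ δ, 0 < δ ∧ δ ≤ δ₀ ∧ δ ≤ 1 / 2 ∧ δ * (4 * (G + 1)) ≤ ε := by
    refine ⟨min δ₀ (min (1 / 2) (ε / (4 * (G + 1)))), by positivity, min_le_left _ _,
      (min_le_right _ _).trans (min_le_left _ _), ?_⟩
    rw [← le_div_iff₀ (by positivity)]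
    exact (min_le_right _ _).trans (min_le_right _ _)
  filter_upwards [eventually_integral_le hc hlim h1 hψ1 hψm hF hA hdec hψdec hφ1 hC hφ4 hδ
    (e := ε / 8) (by positivity), hF.eventually_ge_atTop 0] with N hN hF0 a c hac
  have hca : 0 < c - a := (Real.exp_pos _).trans hac
  set η : ℝ := δ * min (c - a) 1 with hη'
  have hη : 0 < η := by positivity
  have hηδ : η ≤ δ := mul_le_of_le_one_right hδ.le (min_le_right _ _)
  have hηca : η ≤ δ * (c - a) := mul_le_mul_of_nonneg_left (min_le_left _ _) hδ.le
  have hηF : δ * Real.exp (-F N) ≤ η :=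
    mul_le_mul_of_nonneg_left (le_min hac.le (Real.exp_le_one_iff.2 (by linarith))) hδ.le
  have hclose : ∀ y, |(Fintype.card (Ω N) : ℝ)⁻¹ * ∑ w, η⁻¹ * K ((X N w - y) / η) - g y| ≤
      ε / 4 := by
    intro y
    have hφη : Integrable fun u => φ (η * u) := hφi.comp_mul_left' hη.ne'
    have hφηc : Continuous fun u => φ (η * u) := by fun_prop
    have he : ∀ u : ℝ, ‖Complex.exp ((-(2 * π * u * y) : ℝ) * Complex.I)‖ = 1 := fun u =>
      Complex.norm_exp_ofReal_mul_I _
    have i1 : Integrable fun u : ℝ =>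
        Complex.exp ((-(2 * π * u * y) : ℝ) * Complex.I) * (φ (η * u) * ψN N u) := by
      refine (hφη.mul_bdd (c := 1) ?_ (Eventually.of_forall fun u => ?_)).bdd_mul (c := 1)
        (by fun_prop) (Eventually.of_forall fun u => (he u).le)
      · exact (Complex.continuous_ofReal.comp (hc N)).aestronglyMeasurable
      · rw [Complex.norm_real]; exact h1 N u
    have i2 : Integrable fun u : ℝ =>
        Complex.exp ((-(2 * π * u * y) : ℝ) * Complex.I) * (ψ u : ℂ) :=
      hψi.ofReal.bdd_mul (c := 1) (by fun_prop) (Eventually.of_forall fun u => (he u).le)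
    have hsm := smoothed_density (X N) (hchar N) hφi hK hη y
    rw [← Complex.ofReal_re ((Fintype.card (Ω N) : ℝ)⁻¹ * ∑ w, η⁻¹ * K ((X N w - y) / η)), hsm,
      hg, ← Complex.sub_re, ← integral_sub i1 i2]
    refine (Complex.abs_re_le_norm _).trans ((norm_integral_le_integral_norm _).trans ?_)
    have j1 : Integrable fun u => ‖φ (η * u)‖ * |ψN N u - ψ u| := by
      refine hφη.norm.mul_bdd (c := 2) ?_ (Eventually.of_forall fun u => ?_)
      · exact (((hc N).measurable.sub hψm).abs).aestronglyMeasurable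
      · rw [Real.norm_eq_abs, abs_abs]
        linarith [abs_sub (ψN N u) (ψ u), h1 N u, hψ1 u]
    have j2 : Integrable fun u => ‖φ (η * u) - 1‖ * |ψ u| := by
      refine hψi.abs.bdd_mul (c := 2) (by fun_prop) (Eventually.of_forall fun u => ?_)
      rw [norm_norm]
      have := norm_sub_le (φ (η * u)) 1
      rw [norm_one] at this
      linarith [hφ1 (η * u)]
    calc _ ≤ ∫ u, (‖φ (η * u)‖ * |ψN N u - ψ u| + ‖φ (η * u) - 1‖ * |ψ u|) := by
          refine integral_mono (i1.sub i2).norm (j1.add j2) fun u => ?_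
          simp only
          rw [← mul_sub, norm_mul, he, one_mul,
            show φ (η * u) * ψN N u - ψ u = φ (η * u) * ((ψN N u - ψ u : ℝ) : ℂ) +
              (φ (η * u) - 1) * (ψ u : ℂ) by push_cast; ring]
          refine (norm_add_le _ _).trans_eq ?_
          rw [norm_mul, norm_mul, Complex.norm_real, Complex.norm_real, Real.norm_eq_abs,
            Real.norm_eq_abs]
      _ = (∫ u, ‖φ (η * u)‖ * |ψN N u - ψ u|) + ∫ u, ‖φ (η * u) - 1‖ * |ψ u| :=
          integral_add j1 j2
      _ ≤ ε / 8 + ε / 8 := add_le_add (hN η hηF) (hwidth η hη (hηδ.trans hδ1))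
      _ = ε / 4 := by ring
  have hgeq : (fun x => 2 * ∫ u in Set.Ioi (0 : ℝ), Real.cos (2 * π * u * x) * ψ u) = g :=
    funext fun x => integral_cos_eq hψi hψeven x
  have hη2 : 2 * η ≤ c - a := by nlinarith
  rw [hgeq]
  refine (prob_sub_integral_le (X N) hKc hK0 hKs hK1 hη hgc hgG hclose hη2).trans ?_
  have hηG : η * G ≤ δ * (c - a) * G := mul_le_mul_of_nonneg_right hηca hG0
  nlinarith [mul_le_mul_of_nonneg_right hδ3 hca.le, mul_pos hδ hca,
    mul_le_mul_of_nonneg_left hη2 hε.le]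

/-! ### Random signs -/

/-- The characteristic function of a sum of independent random signs with weights `t n`. -/
lemma sum_exp_signs (t : ℕ → ℝ) (N : ℕ) (u : ℝ) :
    ∑ s : Fin N → ({-1, 1} : Finset ℝ),
      Complex.exp ((2 * π * u * ∑ n : Fin N, (s n : ℝ) * t n : ℝ) * Complex.I) =
    2 ^ N * ((∏ n ∈ Finset.range N, Real.cos (2 * π * u * t n) : ℝ) : ℂ) := by
  have h : ∀ s : Fin N → ({-1, 1} : Finset ℝ),
      Complex.exp ((2 * π * u * ∑ n : Fin N, (s n : ℝ) * t n : ℝ) * Complex.I) =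
      ∏ n : Fin N, Complex.exp ((2 * π * u * ((s n : ℝ) * t n) : ℝ) * Complex.I) := by
    intro s
    rw [← Complex.exp_sum, Finset.mul_sum, Complex.ofReal_sum, Finset.sum_mul]
  simp only [h]
  rw [← Fintype.prod_sum (fun (n : Fin N) (x : ({-1, 1} : Finset ℝ)) =>
    Complex.exp ((2 * π * u * ((x : ℝ) * t n) : ℝ) * Complex.I))]
  have h2 : ∀ n : Fin N, ∑ x : ({-1, 1} : Finset ℝ),
      Complex.exp ((2 * π * u * ((x : ℝ) * t n) : ℝ) * Complex.I) =
      2 * (Real.cos (2 * π * u * t n) : ℂ) := by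
    intro n
    rw [Finset.sum_coe_sort ({-1, 1} : Finset ℝ)
      (fun x => Complex.exp ((2 * π * u * (x * t n) : ℝ) * Complex.I)),
      Finset.sum_pair (by norm_num), Complex.ofReal_cos, Complex.two_cos]
    push_cast
    rw [add_comm]
    congr 2 <;> ring
  rw [Finset.prod_congr rfl fun n _ => h2 n, Finset.prod_mul_distrib, Finset.prod_const,
    Finset.card_univ, Fintype.card_fin, Complex.ofReal_prod,
    Fin.prod_univ_eq_prod_range (fun n => (Real.cos (2 * π * u * t n) : ℂ))]

/-- **Theorem (small scale distribution, products of `k` distinct primes).**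
Fix `k ≥ 1`, let `b n` be the `n`-th element (in increasing order, `n ≥ 1`) of
the set of positive integers that are products of exactly `k` distinct primes,
`B_k(n) = b n / n`, and let `f : ℕ → ℝ` satisfy `(log N)/f(N) → 0` and
`f(N)/(N/B_k(N)²)^{1/(2k+1)} → 0`. With
`ϱ(x) = ∏_{n=1}^∞ cos (π x / b n)` and `g(x) = 2 ∫_0^∞ cos (2πux) ϱ(2u) du`,
for every `ε > 0`, for all sufficiently large `N` and every interval `I = [a, c]`
of length `> exp (−f N)` one has `|ℙ[X_N ∈ I] − ∫_I g| ≤ ε |I|`, where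
`ℙ[X_N ∈ I] = 2^{−N} #{s ∈ {−1,1}^N : ∑_{n=1}^N s n / b n ∈ I}`. -/
theorem small_scale_distribution_k_primes
    (k : ℕ) (hk : 1 ≤ k)
    (b : ℕ → ℕ)
    (hb : ∀ n : ℕ, 1 ≤ n →
      b n = Nat.nth (fun m => Squarefree m ∧ m.primeFactors.card = k) (n - 1))
    (Bk : ℕ → ℝ) (hBk : ∀ n : ℕ, 1 ≤ n → Bk n = (b n : ℝ) / n)
    (f : ℕ → ℝ)
    (hf1 : Tendsto (fun N : ℕ => Real.log N / f N) atTop (nhds 0))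
    (hf2 : Tendsto
      (fun N : ℕ => f N / (((N : ℝ) / Bk N ^ 2) ^ ((1 : ℝ) / (2 * (k : ℝ) + 1))))
      atTop (nhds 0))
    (ϱ : ℝ → ℝ)
    (hϱ : ∀ x : ℝ,
      Tendsto (fun N : ℕ => ∏ n ∈ Finset.Icc 1 N, Real.cos (π * x / (b n : ℝ)))
        atTop (nhds (ϱ x))) :
    ∀ ε : ℝ, 0 < ε → ∃ N₀ : ℕ, ∀ N : ℕ, N₀ ≤ N →
      ∀ a c : ℝ, a ≤ c → Real.exp (-f N) < c - a →
        |(Nat.card {s : Fin N → ({-1, 1} : Finset ℝ) //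
              (∑ n : Fin N, (s n : ℝ) / (b ((n : ℕ) + 1) : ℝ)) ∈ Set.Icc a c} : ℝ)
            / 2 ^ N -
          ∫ x in Set.Icc a c,
            (2 * ∫ u in Set.Ioi (0 : ℝ), Real.cos (2 * π * u * x) * ϱ (2 * u))| ≤
        ε * (c - a) := by
  intro ε hε
  obtain ⟨hinf, C, hC, hCle⟩ := exists_nth_isProdPrimes_le k hk
  have hb' : ∀ n, 1 ≤ n → b n = Nat.nth (IsProdPrimes k) (n - 1) := hb
  have hP : ∀ n, 1 ≤ n → IsProdPrimes k (b n) := fun n hn => by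
    rw [hb' n hn]; exact Nat.nth_mem_of_infinite hinf _
  have hmono : StrictMonoOn b (Set.Ici 1) := by
    intro m hm n hn hmn
    rw [Set.mem_Ici] at hm hn
    rw [hb' m hm, hb' n hn]
    exact Nat.nth_strictMono hinf (by omega)
  have hself : ∀ n, 1 ≤ n → n ≤ b n := by
    intro n hn
    induction n, hn using Nat.le_induction with
    | base => exact Nat.one_le_iff_ne_zero.2 (hP 1 le_rfl).1.ne_zero
    | succ n hn ih =>
      have := hmono (Set.mem_Ici.2 hn) (Set.mem_Ici.2 (by omega : 1 ≤ n + 1)) (Nat.lt_succ_self n)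
      omega
  have hbC : ∀ n, 1 ≤ n → (b n : ℝ) ≤ C * (n : ℝ) ^ (5 / 4 : ℝ) := by
    intro n hn
    have h := hCle (n - 1)
    rw [← hb' n hn, Nat.cast_sub hn, Nat.cast_one, sub_add_cancel] at h
    exact h
  have hf : Tendsto (fun N : ℕ => f N / (((N : ℝ) / ((b N : ℝ) / N) ^ 2) ^
      ((1 : ℝ) / (2 * (k : ℝ) + 1)))) atTop (nhds 0) := by
    refine hf2.congr' ?_
    filter_upwards [eventually_ge_atTop 1] with N hN
    rw [hBk N hN]
  obtain ⟨F, U, hU, hfF, hF, hdec⟩ := exists_decay hP hmono hself hC hbC hf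
  set ψN : ℕ → ℝ → ℝ := fun N u =>
    ∏ n ∈ Finset.Icc 1 N, Real.cos (π * (2 * u) / (b n : ℝ)) with hψN
  have heven : ∀ N u, ψN N (-u) = ψN N u := by
    intro N u
    refine Finset.prod_congr rfl fun n _ => ?_
    rw [show π * (2 * -u) / (b n : ℝ) = -(π * (2 * u) / (b n : ℝ)) by ring, Real.cos_neg]
  have h1 : ∀ N u, |ψN N u| ≤ 1 := by
    intro N u
    rw [hψN, Finset.abs_prod]
    exact Finset.prod_le_one (fun _ _ => abs_nonneg _) fun _ _ => Real.abs_cos_le_one _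
  have hdec' : ∀ᶠ N in atTop, ∀ u, |u| ≤ Real.exp (3 * F N) / 2 →
      |ψN N u| ≤ (2 * (1 + U ^ 2)) * (1 + u ^ 2)⁻¹ := by
    filter_upwards [hdec] with N hN u hu
    rw [← div_eq_mul_inv, le_div_iff₀ (by positivity), ← sq_abs u]
    have habs : |ψN N u| = |ψN N (|u|)| := by
      rcases abs_cases u with ⟨h, -⟩ | ⟨h, -⟩ <;> rw [h]
      rw [heven]
    have h0 := abs_nonneg u
    rcases le_or_gt U (2 * |u|) with h | h
    · have hu0 : 0 < |u| := by linarith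
      have h2 := hN (2 * |u|) h (by linarith)
      rw [le_div_iff₀ (by positivity)] at h2
      have h3 : |ψN N u| * (2 * |u|) ^ 2 ≤ 1 := by rw [habs]; exact h2
      nlinarith [h1 N u, abs_nonneg (ψN N u)]
    · calc |ψN N u| * (1 + |u| ^ 2) ≤ 1 * (1 + U ^ 2) := by
            gcongr
            · exact h1 N u
            · linarith
        _ ≤ 2 * (1 + U ^ 2) := by nlinarith [sq_nonneg U]
  have hcard : ∀ N : ℕ, Fintype.card (Fin N → ({-1, 1} : Finset ℝ)) = 2 ^ N := by
    intro N
    rw [Fintype.card_fun, Fintype.card_fin, Fintype.card_coe, Finset.card_pair (by norm_num)]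
  have hne : ∀ N : ℕ, Nonempty (Fin N → ({-1, 1} : Finset ℝ)) := fun N =>
    ⟨fun _ => ⟨1, by simp⟩⟩
  have hchar : ∀ N : ℕ, ∀ u : ℝ, ∑ s : Fin N → ({-1, 1} : Finset ℝ),
      Complex.exp ((2 * π * u * ∑ n : Fin N, (s n : ℝ) / (b ((n : ℕ) + 1) : ℝ) : ℝ) * Complex.I) =
      (Fintype.card (Fin N → ({-1, 1} : Finset ℝ)) : ℂ) * ψN N u := by
    intro N u
    have h := sum_exp_signs (fun n => ((b (n + 1) : ℝ))⁻¹) N u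
    simp only [← div_eq_mul_inv] at h
    rw [h, hcard, Nat.cast_pow, Nat.cast_ofNat, hψN]
    congr 2
    rw [Finset.range_eq_Ico, Finset.prod_Ico_add' (fun n => Real.cos (2 * π * u / (b n : ℝ))) 0 N 1]
    refine Finset.prod_congr (by ext; simp) fun n _ => ?_
    ring_nf
  have hfin := eventually_prob_sub_integral_le (ψ := fun u => ϱ (2 * u))
    (fun N (s : Fin N → ({-1, 1} : Finset ℝ)) => ∑ n : Fin N, (s n : ℝ) / (b ((n : ℕ) + 1) : ℝ))
    hchar (fun N => by rw [hψN]; fun_prop) (fun u => hϱ (2 * u)) h1 heven hF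
    (by positivity) hdec' hε
  obtain ⟨N₀, hN₀⟩ := eventually_atTop.1 hfin
  refine ⟨N₀, fun N hN a c _ hac => ?_⟩
  have h := hN₀ N hN a c ((Real.exp_le_exp.2 (neg_le_neg (hfF N))).trans_lt hac)
  rw [hcard, Nat.cast_pow, Nat.cast_ofNat] at h
  exact h
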